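/- arXiv:1507.05890 — 3 statements merged into one kernel-verified Lean document; each statement's English description precedes it below -/
import Mathlib

section
/- Let (G, z, P, b) be an instance of Hitting Paths in a Flower with petals R_1, …, R_n. If the instance has a solution X', then it has a globally canonical solution X, i.e., a solution X such that for every i ∈ [n] the set X ∩ V(R_i) is a well-defined canonical solution for petal R_i. -/
/-!  Formalization of the "Hitting Paths in a Flower" setting.

A flower graph is a graph with a distinguished core vertex `z` such that every
connected component of `G − z` is a path (a *petal*) no interior vertex of which
is adjacent to `z`.  We represent (up to isomorphism) a flower with `n` petals,
petal `i` having `L i ≥ 1` vertices `r_{i,1}, …, r_{i,L i}`, by the vertex type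
`Option (Fin n × ℕ)`: the core `z` is `none`, and `some (i, j)` (for `1 ≤ j ≤ L i`)
is the `j`-th vertex of petal `i`.  Booleans `al i` / `ar i` record whether the
left/right endpoint of petal `i` is adjacent to the core.  Since hitting a path
only depends on its vertex set, paths are recorded by their vertex sets; the
predicate `IsFlowerPath` characterizes the vertex sets of simple paths of the
flower graph. -/

/-- Vertices of an `n`-petal flower: `none` is the core `z`,
`some (i, j)` is vertex `r_{i,j}` of petal `i`. -/
abbrev FVertex (n : ℕ) := Option (Fin n × ℕ)

/-- The core vertex `z`. -/
def fz {n : ℕ} : FVertex n := none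

/-- The vertex `r_{i,j}` of petal `i`. -/
def fv {n : ℕ} (i : Fin n) (j : ℕ) : FVertex n := some (i, j)

/-- The set of vertices of petal `i` with indices in `s`. -/
def petalSeg {n : ℕ} (i : Fin n) (s : Finset ℕ) : Finset (FVertex n) :=
  s.image (fun j => fv i j)

/-- Index sets of subpaths of petal `i` that can be attached to the core in a simple
path through `z`: the empty set, a prefix `{1, …, c}` whose left endpoint `r_{i,1}`
is adjacent to `z`, or a suffix `{c, …, L i}` whose right endpoint `r_{i,L i}` is
adjacent to `z`. -/
def IsZSeg {n : ℕ} (L : Fin n → ℕ) (al ar : Fin n → Bool) (i : Fin n)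
    (s : Finset ℕ) : Prop :=
  s = ∅ ∨
  (al i = true ∧ ∃ c, 1 ≤ c ∧ c ≤ L i ∧ s = Finset.Icc 1 c) ∨
  (ar i = true ∧ ∃ c, 1 ≤ c ∧ c ≤ L i ∧ s = Finset.Icc c (L i))

/-- `p` is the vertex set of a simple path in the flower graph: either an interval of
one petal, or the core `z` together with (at most) two core-attachable petal segments
which are disjoint if they lie in the same petal. -/
def IsFlowerPath {n : ℕ} (L : Fin n → ℕ) (al ar : Fin n → Bool)
    (p : Finset (FVertex n)) : Prop :=
  (∃ (i : Fin n) (a c : ℕ), 1 ≤ a ∧ a ≤ c ∧ c ≤ L i ∧ p = petalSeg i (Finset.Icc a c)) ∨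
  (∃ (i₁ i₂ : Fin n) (s₁ s₂ : Finset ℕ), IsZSeg L al ar i₁ s₁ ∧ IsZSeg L al ar i₂ s₂ ∧
    (i₁ = i₂ → Disjoint s₁ s₂) ∧ p = insert fz (petalSeg i₁ s₁ ∪ petalSeg i₂ s₂))

/-- An instance `(G, z, P, b)` of Hitting Paths in a Flower: a flower graph with `n`
petals of sizes `L i ≥ 1` (the Booleans `al`, `ar` telling which petal endpoints are
adjacent to the core), a finite set `P` of simple paths in the flower (given by their
vertex sets), and a budget function `b` with `b i ≥ 1`. -/
structure FlowerInstance (n : ℕ) where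
  /-- number of vertices of petal `i` -/
  L : Fin n → ℕ
  hL : ∀ i, 1 ≤ L i
  /-- whether the left endpoint `r_{i,1}` of petal `i` is adjacent to the core -/
  al : Fin n → Bool
  /-- whether the right endpoint `r_{i,L i}` of petal `i` is adjacent to the core -/
  ar : Fin n → Bool
  /-- the set of simple paths to be hit, given by their vertex sets -/
  P : Finset (Finset (FVertex n))
  hP : ∀ p ∈ P, IsFlowerPath L al ar p
  /-- the budget function -/
  b : Fin n → ℕ
  hb : ∀ i, 1 ≤ b i

/-- The (vertex set of) petal `R_i`. -/
def FlowerInstance.petal {n : ℕ} (F : FlowerInstance n) (i : Fin n) :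
    Finset (FVertex n) :=
  petalSeg i (Finset.Icc 1 (F.L i))

/-- A solution: a set `X ⊆ V(G) ∖ {z}` that intersects every path of `P` and contains
exactly `b i` vertices of petal `R_i`, for every `i`. -/
def FlowerInstance.IsSolution {n : ℕ} (F : FlowerInstance n)
    (X : Finset (FVertex n)) : Prop :=
  (∀ x ∈ X, ∃ (i : Fin n) (j : ℕ), 1 ≤ j ∧ j ≤ F.L i ∧ x = fv i j) ∧
  (∀ p ∈ F.P, (X ∩ p).Nonempty) ∧
  (∀ i : Fin n, (X ∩ F.petal i).card = F.b i)

/-- The pairs `(a, c)` with `1 ≤ a ≤ c ≤ L i` such that the interval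
`{r_{i,a}, …, r_{i,c}}` of petal `i` is (the vertex set of) a path of `P`;
these are exactly the paths of `P` contained entirely within petal `R_i`. -/
def FlowerInstance.innerIntervals {n : ℕ} (F : FlowerInstance n) (i : Fin n) :
    Finset (ℕ × ℕ) :=
  ((Finset.Icc 1 (F.L i)) ×ˢ (Finset.Icc 1 (F.L i))).filter
    (fun q => q.1 ≤ q.2 ∧ petalSeg i (Finset.Icc q.1 q.2) ∈ F.P)

/-- The intervals among `I` that are not intersected by `X`. -/
def unhit (I : Finset (ℕ × ℕ)) (X : Finset ℕ) : Finset (ℕ × ℕ) :=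
  I.filter (fun q => ∀ j ∈ X, ¬ (q.1 ≤ j ∧ j ≤ q.2))

/-- Step (2a) of the canonical-solution process: while some interval of `I` is not
intersected by `X`, add the minimum right endpoint of an unhit interval.  The fuel
argument only ensures termination; `I.card` iterations always suffice. -/
def greedyA (I : Finset (ℕ × ℕ)) : ℕ → Finset ℕ → Finset ℕ
  | 0, X => X
  | (fuel + 1), X =>
    if h : (unhit I X).Nonempty then
      greedyA I fuel (insert (((unhit I X).image Prod.snd).min' (h.image _)) X)
    else X

/-- Step (2b) of the canonical-solution process: while `|X| < bdg` and
`Y := Icc lo hi \ X` is nonempty, add the largest element of `Y`.  The fuel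
argument only ensures termination; `bdg` iterations always suffice. -/
def greedyB (lo hi bdg : ℕ) : ℕ → Finset ℕ → Finset ℕ
  | 0, X => X
  | (fuel + 1), X =>
    if h : X.card < bdg ∧ ((Finset.Icc lo hi) \ X).Nonempty then
      greedyB lo hi bdg fuel (insert (((Finset.Icc lo hi) \ X).max' h.2) X)
    else X

/-- The set `X_{i,ℓ}` produced by steps (2), (2a), (2b) of the canonical-solution
process for petal `R_i`, starting from `X_{i,ℓ} = {ℓ}`. -/
def FlowerInstance.canonicalAux {n : ℕ} (F : FlowerInstance n) (i : Fin n) (ℓ : ℕ) :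
    Finset ℕ :=
  greedyB ℓ (F.L i) (F.b i) (F.b i)
    (greedyA (F.innerIntervals i) (F.innerIntervals i).card {ℓ})

/-- The canonical `ℓ`-th solution for petal `R_i` (given by the indices of its
vertices on the petal), or `none` (NIL) if step (1) applies — some path of `P` is
contained within `{r_{i,1}, …, r_{i,ℓ-1}}` — or if the produced set does not have
exactly `b i` elements (step (2c)). -/
def FlowerInstance.canonical {n : ℕ} (F : FlowerInstance n) (i : Fin n) (ℓ : ℕ) :
    Option (Finset ℕ) :=
  if ∃ q ∈ F.innerIntervals i, q.2 < ℓ then none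
  else if (F.canonicalAux i ℓ).card = F.b i then some (F.canonicalAux i ℓ) else none

/-- `X` is at least as advanced as the hitting set `S` of the intervals `I`: `m` is an element
of `X` such that all intervals missed by `X` start after `m`, and `S` spends at least `|X|`
elements up to `m`. -/
structure StaysAhead (I : Finset (ℕ × ℕ)) (S : Finset ℕ) (X : Finset ℕ) (m : ℕ) : Prop where
  mem : m ∈ X
  lt_of_unhit : ∀ q ∈ unhit I X, m < q.1
  card_le : X.card ≤ (S.filter (· ≤ m)).card

lemma mem_unhit {I : Finset (ℕ × ℕ)} {X : Finset ℕ} {q : ℕ × ℕ} :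
    q ∈ unhit I X ↔ q ∈ I ∧ ∀ j ∈ X, ¬ (q.1 ≤ j ∧ j ≤ q.2) := by
  simp [unhit]

/-- Adding the smallest right endpoint of a missed interval, attained by `q₀`, keeps the greedy set ahead. -/
lemma StaysAhead.insert {I : Finset (ℕ × ℕ)} {S X : Finset ℕ} {m : ℕ}
    (hS : ∀ q ∈ I, ∃ j ∈ S, q.1 ≤ j ∧ j ≤ q.2) (h : StaysAhead I S X m)
    {q₀ : ℕ × ℕ} (hq₀ : q₀ ∈ unhit I X) (hmin : ∀ q ∈ unhit I X, q₀.2 ≤ q.2) :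
    StaysAhead I S (insert q₀.2 X) q₀.2 := by
  refine ⟨Finset.mem_insert_self _ _, fun q hq => ?_, ?_⟩
  · rw [mem_unhit] at hq
    have hle := hmin q (mem_unhit.2 ⟨hq.1, fun j hj => hq.2 j (Finset.mem_insert_of_mem hj)⟩)
    have := hq.2 q₀.2 (Finset.mem_insert_self _ _)
    omega
  · obtain ⟨s, hsS, hs⟩ := hS q₀ (mem_unhit.1 hq₀).1
    have hm := h.lt_of_unhit q₀ hq₀
    have hlt : (S.filter (· ≤ m)).card < (S.filter (· ≤ q₀.2)).card := by
      refine Finset.card_lt_card (Finset.ssubset_iff_of_subset (fun x hx => ?_) |>.2 ⟨s, ?_, ?_⟩)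
      · simp only [Finset.mem_filter] at hx ⊢
        exact ⟨hx.1, by omega⟩
      · simp [hsS, hs.2]
      · simp only [Finset.mem_filter, not_and]
        omega
    have := Finset.card_insert_le q₀.2 X
    have := h.card_le
    omega

/-- With enough fuel, step (2a) hits all intervals while staying ahead of any hitting set. -/
lemma greedyA_spec {I : Finset (ℕ × ℕ)} {S : Finset ℕ} {lo hi : ℕ}
    (hS : ∀ q ∈ I, ∃ j ∈ S, q.1 ≤ j ∧ j ≤ q.2) (hI : ∀ q ∈ I, q.1 ≤ q.2 ∧ q.2 ≤ hi)
    (fuel : ℕ) (X : Finset ℕ) (m : ℕ) (h : StaysAhead I S X m) (hX : X ⊆ Finset.Icc lo hi)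
    (hfuel : (unhit I X).card ≤ fuel) :
    X ⊆ greedyA I fuel X ∧ greedyA I fuel X ⊆ Finset.Icc lo hi ∧
      unhit I (greedyA I fuel X) = ∅ ∧ ∃ m', StaysAhead I S (greedyA I fuel X) m' := by
  induction fuel generalizing X m with
  | zero => exact ⟨subset_rfl, hX, by simpa [greedyA] using hfuel, m, h⟩
  | succ k ih =>
    rw [greedyA]
    split_ifs with hne
    · obtain ⟨q₀, hq₀, hc⟩ := Finset.mem_image.1 (Finset.min'_mem _ (hne.image Prod.snd))
      have hmin : ∀ q ∈ unhit I X, q₀.2 ≤ q.2 := fun q hq => by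
        rw [hc]
        exact Finset.min'_le _ _ (Finset.mem_image_of_mem _ hq)
      rw [← hc]
      have hIq := hI q₀ (mem_unhit.1 hq₀).1
      have hX' : insert q₀.2 X ⊆ Finset.Icc lo hi := by
        refine Finset.insert_subset ?_ hX
        have := Finset.mem_Icc.1 (hX h.mem)
        have := h.lt_of_unhit q₀ hq₀
        simp only [Finset.mem_Icc]
        omega
      have hcard : (unhit I (insert q₀.2 X)).card < (unhit I X).card := by
        refine Finset.card_lt_card (Finset.ssubset_iff_of_subset (fun q hq => ?_) |>.2
          ⟨q₀, hq₀, fun hq => ?_⟩)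
        · rw [mem_unhit] at hq ⊢
          exact ⟨hq.1, fun j hj => hq.2 j (Finset.mem_insert_of_mem hj)⟩
        · exact (mem_unhit.1 hq).2 q₀.2 (Finset.mem_insert_self _ _) ⟨hIq.1, le_rfl⟩
      obtain ⟨h₁, h₂⟩ := ih _ _ (h.insert hS hq₀ hmin) hX' (by omega)
      exact ⟨(Finset.subset_insert _ _).trans h₁, h₂⟩
    · exact ⟨subset_rfl, hX, Finset.not_nonempty_iff_eq_empty.1 hne, m, h⟩

/-- With enough fuel, step (2b) fills up the budget, and it uses the last vertex whenever it adds
anything. -/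
lemma greedyB_spec {lo hi bdg : ℕ} (hbdg : bdg ≤ (Finset.Icc lo hi).card) (fuel : ℕ)
    (X : Finset ℕ) (hX : X ⊆ Finset.Icc lo hi) (hcard : X.card ≤ bdg)
    (hfuel : bdg ≤ X.card + fuel) :
    X ⊆ greedyB lo hi bdg fuel X ∧ greedyB lo hi bdg fuel X ⊆ Finset.Icc lo hi ∧
      (greedyB lo hi bdg fuel X).card = bdg ∧
      (X.card < bdg → hi ∈ greedyB lo hi bdg fuel X) := by
  induction fuel generalizing X with
  | zero => exact ⟨subset_rfl, hX, by simp only [greedyB]; omega, fun _ => by omega⟩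
  | succ k ih =>
    rw [greedyB]
    split_ifs with hne
    · have hmem := Finset.max'_mem _ hne.2
      set c := (Finset.Icc lo hi \ X).max' hne.2
      obtain ⟨hcI, hcX⟩ := Finset.mem_sdiff.1 hmem
      have hins := Finset.card_insert_of_notMem hcX
      obtain ⟨h₁, h₂, h₃, -⟩ := ih (insert c X) (Finset.insert_subset hcI hX) (by omega) (by omega)
      refine ⟨(Finset.subset_insert _ _).trans h₁, h₂, h₃, fun _ => h₁ ?_⟩
      by_cases hhi : hi ∈ X
      · exact Finset.mem_insert_of_mem hhi
      · have hcI' := Finset.mem_Icc.1 hcI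
        have hle : hi ≤ c := Finset.le_max' _ _ (by
          simp only [Finset.mem_sdiff, Finset.mem_Icc]
          exact ⟨⟨by omega, le_rfl⟩, hhi⟩)
        rw [show hi = c by omega]
        exact Finset.mem_insert_self _ _
    · have hfull : ¬ X.card < bdg := fun hlt => by
        refine hne ⟨hlt, Finset.sdiff_nonempty.2 fun hsub => ?_⟩
        have := Finset.card_le_card hsub
        omega
      exact ⟨subset_rfl, hX, by omega, fun hlt => absurd hlt hfull⟩

/-- A budget-respecting hitting set `S` of the inner paths of a petal can be replaced by a canonical
solution that starts no later and ends no earlier than `S`. -/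
lemma FlowerInstance.exists_canonical {n : ℕ} (F : FlowerInstance n) (i : Fin n) (S : Finset ℕ)
    (hSL : S ⊆ Finset.Icc 1 (F.L i)) (hSb : S.card = F.b i)
    (hS : ∀ q ∈ F.innerIntervals i, ∃ j ∈ S, q.1 ≤ j ∧ j ≤ q.2) :
    ∃ (ℓ : ℕ) (Y : Finset ℕ), F.canonical i ℓ = some Y ∧ Y ⊆ Finset.Icc 1 (F.L i) ∧
      Y.card = F.b i ∧ (∀ q ∈ F.innerIntervals i, ∃ j ∈ Y, q.1 ≤ j ∧ j ≤ q.2) ∧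
      ∀ s ∈ S, (∃ y ∈ Y, y ≤ s) ∧ ∃ y ∈ Y, s ≤ y := by
  have hne : S.Nonempty := Finset.card_pos.1 (by have := F.hb i; omega)
  obtain ⟨ℓ, hℓS, hℓ⟩ := S.exists_min_image id hne
  simp only [id] at hℓ
  have hℓL := Finset.mem_Icc.1 (hSL hℓS)
  have hsub : S ⊆ Finset.Icc ℓ (F.L i) := fun s hs =>
    Finset.mem_Icc.2 ⟨hℓ s hs, (Finset.mem_Icc.1 (hSL hs)).2⟩
  have hI : ∀ q ∈ F.innerIntervals i, q.1 ≤ q.2 ∧ q.2 ≤ F.L i := fun q hq => by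
    simp only [FlowerInstance.innerIntervals, Finset.mem_filter, Finset.mem_product,
      Finset.mem_Icc] at hq
    omega
  have hℓI : ∀ q ∈ F.innerIntervals i, ℓ ≤ q.2 := fun q hq => by
    obtain ⟨j, hj, -, hj₂⟩ := hS q hq
    exact (hℓ j hj).trans hj₂
  have hinit : StaysAhead (F.innerIntervals i) S {ℓ} ℓ := by
    refine ⟨Finset.mem_singleton_self _, fun q hq => ?_, ?_⟩
    · rw [mem_unhit] at hq
      have := hq.2 ℓ (Finset.mem_singleton_self _)
      have := hℓI q hq.1
      omega
    · rw [Finset.card_singleton, Nat.succ_le_iff, Finset.card_pos]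
      exact ⟨ℓ, by simp [hℓS]⟩
  obtain ⟨hA₁, hA₂, hA₃, m, hm⟩ := greedyA_spec (lo := ℓ) hS hI (F.innerIntervals i).card {ℓ} ℓ
    hinit (by simp [hℓL.2]) (Finset.card_filter_le _ _)
  set A := greedyA (F.innerIntervals i) (F.innerIntervals i).card {ℓ}
  have hcard := hm.card_le
  have hfilter := Finset.card_filter_le S (· ≤ m)
  obtain ⟨hB₁, hB₂, hB₃, hB₄⟩ := greedyB_spec (lo := ℓ) (hi := F.L i) (bdg := F.b i)
    (hSb ▸ Finset.card_le_card hsub) (F.b i) A hA₂ (by omega) (by omega)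
  refine ⟨ℓ, greedyB ℓ (F.L i) (F.b i) (F.b i) A, ?_, ?_, hB₃, fun q hq => ?_, fun s hs => ⟨?_, ?_⟩⟩
  · rw [FlowerInstance.canonical, if_neg, if_pos]
    · rfl
    · exact hB₃
    · rintro ⟨q, hq, hlt⟩
      exact absurd (hℓI q hq) (by omega)
  · exact hB₂.trans (Finset.Icc_subset_Icc_left hℓL.1)
  · by_contra! hcon
    have : q ∈ unhit (F.innerIntervals i) A :=
      mem_unhit.2 ⟨hq, fun j hj hj' => absurd (hcon j (hB₁ hj) hj'.1) (by omega)⟩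
    simp [hA₃] at this
  · exact ⟨ℓ, hB₁ (hA₁ (Finset.mem_singleton_self _)), hℓ s hs⟩
  · by_cases hlt : A.card < F.b i
    · exact ⟨_, hB₄ hlt, (Finset.mem_Icc.1 (hSL hs)).2⟩
    · refine ⟨m, hB₁ hm.mem, ?_⟩
      have heq := Finset.eq_of_subset_of_card_le (Finset.filter_subset (· ≤ m) S) (by omega)
      rw [← heq] at hs
      exact (Finset.mem_filter.1 hs).2

lemma fv_mem_petalSeg {n : ℕ} {i k : Fin n} {j : ℕ} {s : Finset ℕ} :
    fv k j ∈ petalSeg i s ↔ k = i ∧ j ∈ s := by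
  simp only [petalSeg, fv, Finset.mem_image, Option.some.injEq, Prod.mk.injEq]
  grind

lemma fz_notMem_petalSeg {n : ℕ} {i : Fin n} {s : Finset ℕ} : fz ∉ petalSeg i s := by
  simp [petalSeg, fv, fz]

lemma card_petalSeg {n : ℕ} (i : Fin n) (s : Finset ℕ) : (petalSeg i s).card = s.card :=
  Finset.card_image_of_injective _ fun a c h => by simpa [fv] using h

/-- A core-attachable segment hit by `S` is hit by any `Y` that starts no later and ends no
earlier than `S`. -/
lemma IsZSeg.exists_mem {n : ℕ} {L : Fin n → ℕ} {al ar : Fin n → Bool} {i : Fin n}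
    {s Y : Finset ℕ} (hs : IsZSeg L al ar i s) (hY : Y ⊆ Finset.Icc 1 (L i)) {j : ℕ} (hj : j ∈ s)
    (hle : ∃ y ∈ Y, y ≤ j) (hge : ∃ y ∈ Y, j ≤ y) : ∃ y ∈ Y, y ∈ s := by
  obtain ⟨y, hyY, hy⟩ := hle
  obtain ⟨y', hyY', hy'⟩ := hge
  have hyI := Finset.mem_Icc.1 (hY hyY)
  have hyI' := Finset.mem_Icc.1 (hY hyY')
  rcases hs with rfl | ⟨-, c, -, -, rfl⟩ | ⟨-, c, -, -, rfl⟩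
  · simp at hj
  · rw [Finset.mem_Icc] at hj
    exact ⟨y, hyY, Finset.mem_Icc.2 (by omega)⟩
  · rw [Finset.mem_Icc] at hj
    exact ⟨y', hyY', Finset.mem_Icc.2 (by omega)⟩

/-- **Lemma: a canonical solution exists.** If an instance
`(G, z, P, b)` of Hitting Paths in a Flower has a solution `X'`, then it has a
globally canonical solution `X`: a solution such that for every petal `R_i` the
set `X ∩ V(R_i)` is a well-defined canonical solution for `R_i`. -/
theorem stmt_6 {n : ℕ} (F : FlowerInstance n) (X' : Finset (FVertex n))
    (hX' : F.IsSolution X') :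
    ∃ X : Finset (FVertex n), F.IsSolution X ∧
      ∀ i : Fin n, ∃ (ℓ : ℕ) (Xi : Finset ℕ),
        F.canonical i ℓ = some Xi ∧ X ∩ F.petal i = petalSeg i Xi := by
  obtain ⟨hV, hP, hb⟩ := hX'
  let S : Fin n → Finset ℕ := fun i => (Finset.Icc 1 (F.L i)).filter (fun j => fv i j ∈ X')
  have hmemS : ∀ {i j}, fv i j ∈ X' → j ∈ S i := fun {i j} h => by
    obtain ⟨i', j', h₁, h₂, h₃⟩ := hV _ h
    obtain ⟨rfl, rfl⟩ : i = i' ∧ j = j' := by simpa [fv] using h₃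
    simp [S, h, h₁, h₂]
  have hfv : ∀ x ∈ X', ∃ i j, x = fv i j := fun x hx => by
    obtain ⟨i, j, -, -, h⟩ := hV x hx
    exact ⟨i, j, h⟩
  have hSX : ∀ i, X' ∩ F.petal i = petalSeg i (S i) := fun i => by
    ext x
    simp only [Finset.mem_inter, FlowerInstance.petal, petalSeg, Finset.mem_image, S,
      Finset.mem_filter]
    grind
  have key := fun i => F.exists_canonical i (S i) (Finset.filter_subset _ _)
    (by rw [← card_petalSeg i, ← hSX, hb]) (fun q hq => by
      simp only [FlowerInstance.innerIntervals, Finset.mem_filter] at hq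
      obtain ⟨x, hx⟩ := hP _ hq.2.2
      obtain ⟨hxX, hxp⟩ := Finset.mem_inter.1 hx
      obtain ⟨k, j, rfl⟩ := hfv x hxX
      obtain ⟨rfl, hj⟩ := fv_mem_petalSeg.1 hxp
      exact ⟨j, hmemS hxX, Finset.mem_Icc.1 hj⟩)
  choose ℓ Y hcan hYL hYb hYI hYS using key
  have hmem : ∀ i j, fv i j ∈ Finset.univ.biUnion (fun i => petalSeg i (Y i)) ↔ j ∈ Y i :=
    fun i j => by simp [fv_mem_petalSeg]
  have hinter : ∀ i, Finset.univ.biUnion (fun i => petalSeg i (Y i)) ∩ F.petal i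
      = petalSeg i (Y i) := fun i => by
    ext x
    rcases x with - | ⟨k, j⟩
    · exact iff_of_false (fun h => fz_notMem_petalSeg (Finset.mem_inter.1 h).2) fz_notMem_petalSeg
    · change fv k j ∈ _ ↔ fv k j ∈ _
      rw [Finset.mem_inter, hmem, FlowerInstance.petal, fv_mem_petalSeg, fv_mem_petalSeg]
      constructor
      · rintro ⟨h, rfl, -⟩
        exact ⟨rfl, h⟩
      · rintro ⟨rfl, h⟩
        exact ⟨h, rfl, hYL k h⟩
  refine ⟨Finset.univ.biUnion (fun i => petalSeg i (Y i)), ⟨fun x hx => ?_, fun p hp => ?_,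
    fun i => by rw [hinter, card_petalSeg, hYb]⟩, fun i => ⟨ℓ i, Y i, hcan i, hinter i⟩⟩
  · obtain ⟨i, -, hi⟩ := Finset.mem_biUnion.1 hx
    obtain ⟨j, hj, rfl⟩ := Finset.mem_image.1 hi
    have := Finset.mem_Icc.1 (hYL i hj)
    exact ⟨i, j, this.1, this.2, rfl⟩
  · rcases F.hP p hp with ⟨i, a, c, ha, hac, hc, rfl⟩ | ⟨i₁, i₂, s₁, s₂, hs₁, hs₂, -, rfl⟩
    · obtain ⟨j, hj, hj'⟩ := hYI i (a, c) (by
        simp only [FlowerInstance.innerIntervals, Finset.mem_filter, Finset.mem_product,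
          Finset.mem_Icc]
        exact ⟨⟨by omega, by omega⟩, hac, hp⟩)
      exact ⟨fv i j, Finset.mem_inter.2
        ⟨(hmem i j).2 hj, fv_mem_petalSeg.2 ⟨rfl, Finset.mem_Icc.2 hj'⟩⟩⟩
    · obtain ⟨x, hx⟩ := hP _ hp
      obtain ⟨hxX, hxp⟩ := Finset.mem_inter.1 hx
      obtain ⟨k, j, rfl⟩ := hfv x hxX
      have hj := hYS k j (hmemS hxX)
      rw [Finset.mem_insert, Finset.mem_union, fv_mem_petalSeg, fv_mem_petalSeg] at hxp
      rcases hxp with h | ⟨rfl, h⟩ | ⟨rfl, h⟩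
      · simp [fv, fz] at h
      · obtain ⟨y, hy, hys⟩ := hs₁.exists_mem (hYL k) h hj.1 hj.2
        refine ⟨fv k y, Finset.mem_inter.2 ⟨(hmem k y).2 hy, ?_⟩⟩
        exact Finset.mem_insert_of_mem (Finset.mem_union_left _ (fv_mem_petalSeg.2 ⟨rfl, hys⟩))
      · obtain ⟨y, hy, hys⟩ := hs₂.exists_mem (hYL k) h hj.1 hj.2
        refine ⟨fv k y, Finset.mem_inter.2 ⟨(hmem k y).2 hy, ?_⟩⟩
        exact Finset.mem_insert_of_mem (Finset.mem_union_right _ (fv_mem_petalSeg.2 ⟨rfl, hys⟩))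
end

section
/- Let (G, z, P, b) be an instance of Hitting Paths in a Flower, let R_i be a petal, and let Q = {r_{i,c}, …, r_{i,|V(R_i)|}} be a suffix of petal R_i. Then (a) a well-defined canonical ℓ-th solution X_{i,ℓ} for R_i intersects Q if and only if max(X_{i,ℓ}) ≥ c, and (b) if some well-defined canonical solution for R_i intersects Q, then there is an index ℓ* such that for every ℓ with a well-defined canonical ℓ-th solution X_{i,ℓ}, the set X_{i,ℓ} intersects Q if and only if ℓ ≥ ℓ*. -/
theorem subset_greedyA (I : Finset (ℕ × ℕ)) (fuel : ℕ) (X : Finset ℕ) :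
    X ⊆ greedyA I fuel X := by
  induction fuel generalizing X with
  | zero => exact Finset.Subset.refl X
  | succ k ih =>
    unfold greedyA
    split_ifs
    · exact (Finset.subset_insert _ X).trans (ih _)
    · exact Finset.Subset.refl X

theorem greedyA_le {I : Finset (ℕ × ℕ)} {M : ℕ} (hI : ∀ q ∈ I, q.2 ≤ M) (fuel : ℕ)
    {X : Finset ℕ} (hX : ∀ x ∈ X, x ≤ M) : ∀ x ∈ greedyA I fuel X, x ≤ M := by
  induction fuel generalizing X with
  | zero => exact hX
  | succ k ih =>
    unfold greedyA
    split_ifs with h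
    · refine ih fun x hx => ?_
      rcases Finset.mem_insert.1 hx with rfl | hx
      · obtain ⟨q, hq, hqe⟩ := Finset.mem_image.1 (Finset.min'_mem _ (h.image Prod.snd))
        rw [← hqe]
        exact hI q (Finset.mem_filter.1 hq).1
      · exact hX x hx
    · exact hX

theorem subset_greedyB (lo hi bdg fuel : ℕ) (X : Finset ℕ) :
    X ⊆ greedyB lo hi bdg fuel X := by
  induction fuel generalizing X with
  | zero => exact Finset.Subset.refl X
  | succ k ih =>
    unfold greedyB
    split_ifs
    · exact (Finset.subset_insert _ X).trans (ih _)
    · exact Finset.Subset.refl X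

theorem greedyB_le {lo hi bdg : ℕ} (fuel : ℕ) {X : Finset ℕ} (hX : ∀ x ∈ X, x ≤ hi) :
    ∀ x ∈ greedyB lo hi bdg fuel X, x ≤ hi := by
  induction fuel generalizing X with
  | zero => exact hX
  | succ k ih =>
    unfold greedyB
    split_ifs with h
    · refine ih fun x hx => ?_
      rcases Finset.mem_insert.1 hx with rfl | hx
      · have hm := Finset.max'_mem _ h.2
        exact (Finset.mem_Icc.1 (Finset.mem_sdiff.1 hm).1).2
      · exact hX x hx
    · exact hX

theorem greedyB_eq_self {lo hi bdg : ℕ} (fuel : ℕ) {X : Finset ℕ} (hX : bdg ≤ X.card) :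
    greedyB lo hi bdg fuel X = X := by
  cases fuel with
  | zero => rfl
  | succ k =>
    unfold greedyB
    rw [dif_neg fun h => absurd h.1 (not_lt.2 hX)]

theorem hi_mem_greedyB {lo hi bdg fuel : ℕ} {X : Finset ℕ} (hlo : lo ≤ hi)
    (hfuel : 1 ≤ fuel) (hX : X.card < bdg) : hi ∈ greedyB lo hi bdg fuel X := by
  by_cases hm : hi ∈ X
  · exact subset_greedyB _ _ _ _ _ hm
  obtain ⟨k, rfl⟩ : ∃ k, fuel = k + 1 := ⟨fuel - 1, by omega⟩
  have hhi : hi ∈ Finset.Icc lo hi \ X :=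
    Finset.mem_sdiff.2 ⟨Finset.mem_Icc.2 ⟨hlo, le_rfl⟩, hm⟩
  unfold greedyB
  rw [dif_pos ⟨hX, ⟨hi, hhi⟩⟩]
  apply subset_greedyB
  have hmax : (Finset.Icc lo hi \ X).max' ⟨hi, hhi⟩ = hi :=
    le_antisymm
      (Finset.mem_Icc.1 (Finset.mem_sdiff.1 (Finset.max'_mem _ ⟨hi, hhi⟩)).1).2
      (Finset.le_max' _ _ hhi)
  rw [hmax]
  exact Finset.mem_insert_self _ _

/-- `m` is the largest element of `X`, and the intervals of `I` not hit by `X` are exactly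
those starting to the right of `m`. -/
structure IsFrontier (I : Finset (ℕ × ℕ)) (X : Finset ℕ) (m : ℕ) : Prop where
  mem : m ∈ X
  le : ∀ x ∈ X, x ≤ m
  mem_unhit : ∀ q ∈ I, q ∈ unhit I X ↔ m < q.1

theorem isFrontier_singleton {I : Finset (ℕ × ℕ)} {m : ℕ} (hm : ∀ q ∈ I, m ≤ q.2) :
    IsFrontier I {m} m where
  mem := Finset.mem_singleton_self m
  le x hx := (Finset.mem_singleton.1 hx).le
  mem_unhit q hq := by
    have := hm q hq
    simp only [unhit, Finset.mem_filter, Finset.mem_singleton, forall_eq, hq, true_and]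
    omega

theorem IsFrontier.lt_min' {I : Finset (ℕ × ℕ)} {X : Finset ℕ} {m : ℕ}
    (hF : IsFrontier I X m) (hI : ∀ q ∈ I, q.1 ≤ q.2) (h : (unhit I X).Nonempty) :
    m < ((unhit I X).image Prod.snd).min' (h.image _) := by
  obtain ⟨q, hq, hqe⟩ := Finset.mem_image.1 (Finset.min'_mem _ (h.image Prod.snd))
  have hqI := (Finset.mem_filter.1 hq).1
  rw [← hqe]
  exact ((hF.mem_unhit q hqI).1 hq).trans_le (hI q hqI)

theorem IsFrontier.insert_min' {I : Finset (ℕ × ℕ)} {X : Finset ℕ} {m : ℕ}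
    (hF : IsFrontier I X m) (hI : ∀ q ∈ I, q.1 ≤ q.2) (h : (unhit I X).Nonempty) :
    IsFrontier I (insert (((unhit I X).image Prod.snd).min' (h.image _)) X)
      (((unhit I X).image Prod.snd).min' (h.image _)) where
  mem := Finset.mem_insert_self _ _
  le x hx := by
    rcases Finset.mem_insert.1 hx with rfl | hx
    · exact le_rfl
    · exact (hF.le x hx).trans (hF.lt_min' hI h).le
  mem_unhit q hq := by
    have hlt := hF.lt_min' hI h
    have hmin : q ∈ unhit I X → ((unhit I X).image Prod.snd).min' (h.image _) ≤ q.2 :=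
      fun hu => Finset.min'_le _ _ (Finset.mem_image_of_mem _ hu)
    have hX := hF.mem_unhit q hq
    generalize ((unhit I X).image Prod.snd).min' (h.image _) = t at hlt hmin
    have hins : q ∈ unhit I (insert t X) ↔ ¬ (q.1 ≤ t ∧ t ≤ q.2) ∧ q ∈ unhit I X := by
      simp only [unhit, Finset.mem_filter, Finset.forall_mem_insert, hq, true_and]
    rw [hins]
    constructor
    · rintro ⟨hnot, hu⟩
      have := hmin hu
      omega
    · intro ht
      exact ⟨by omega, hX.2 (hlt.trans ht)⟩

/-- Starting the greedy process further to the right, from a set of the same size, adds at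
most as many elements; if it adds equally many, it reaches at least as far to the right. -/
theorem greedyA_compare {I : Finset (ℕ × ℕ)} (hI : ∀ q ∈ I, q.1 ≤ q.2) (fuel : ℕ)
    {X X' : Finset ℕ} {m m' : ℕ} (hF : IsFrontier I X m) (hF' : IsFrontier I X' m')
    (hm : m ≤ m') (hcard : X.card = X'.card) :
    (greedyA I fuel X').card ≤ (greedyA I fuel X).card ∧
      ((greedyA I fuel X').card = (greedyA I fuel X).card →
        ∀ x ∈ greedyA I fuel X, ∃ y ∈ greedyA I fuel X', x ≤ y) := by
  induction fuel generalizing X X' m m' with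
  | zero => exact ⟨hcard.ge, fun _ x hx => ⟨m', hF'.mem, (hF.le x hx).trans hm⟩⟩
  | succ k ih =>
    by_cases h' : (unhit I X').Nonempty
    · have hsub : unhit I X' ⊆ unhit I X := fun q hq => by
        have hqI := (Finset.mem_filter.1 hq).1
        exact (hF.mem_unhit q hqI).2 (hm.trans_lt ((hF'.mem_unhit q hqI).1 hq))
      have h : (unhit I X).Nonempty := h'.mono hsub
      have notMem : ((unhit I X).image Prod.snd).min' (h.image _) ∉ X := fun hx =>
        (hF.lt_min' hI h).not_ge (hF.le _ hx)
      have notMem' : ((unhit I X').image Prod.snd).min' (h'.image _) ∉ X' := fun hx =>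
        (hF'.lt_min' hI h').not_ge (hF'.le _ hx)
      have hstep : greedyA I (k + 1) X = greedyA I k
          (insert (((unhit I X).image Prod.snd).min' (h.image _)) X) := by
        rw [greedyA, dif_pos h]
      have hstep' : greedyA I (k + 1) X' = greedyA I k
          (insert (((unhit I X').image Prod.snd).min' (h'.image _)) X') := by
        rw [greedyA, dif_pos h']
      rw [hstep, hstep']
      refine ih (hF.insert_min' hI h) (hF'.insert_min' hI h') ?_ ?_
      · exact Finset.min'_subset _ (Finset.image_subset_image hsub)
      · rw [Finset.card_insert_of_notMem notMem, Finset.card_insert_of_notMem notMem', hcard]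
    · have hstep' : greedyA I (k + 1) X' = X' := by rw [greedyA, dif_neg h']
      have hsub := subset_greedyA I (k + 1) X
      rw [hstep', ← hcard]
      refine ⟨Finset.card_le_card hsub, fun heq x hx => ?_⟩
      rw [← Finset.eq_of_subset_of_card_le hsub heq.ge] at hx
      exact ⟨m', hF'.mem, (hF.le x hx).trans hm⟩

namespace FlowerInstance

variable {n : ℕ} (F : FlowerInstance n) (i : Fin n)

theorem fst_le_snd_of_mem_innerIntervals : ∀ q ∈ F.innerIntervals i, q.1 ≤ q.2 :=
  fun _ hq => (Finset.mem_filter.1 hq).2.1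

theorem snd_le_of_mem_innerIntervals : ∀ q ∈ F.innerIntervals i, q.2 ≤ F.L i :=
  fun _ hq => (Finset.mem_Icc.1 (Finset.mem_product.1 (Finset.mem_filter.1 hq).1).2).2

variable {F i}

theorem canonical_eq_some {ℓ : ℕ} {X : Finset ℕ} (h : F.canonical i ℓ = some X) :
    (∀ q ∈ F.innerIntervals i, ℓ ≤ q.2) ∧ X.card = F.b i ∧ F.canonicalAux i ℓ = X := by
  unfold canonical at h
  split_ifs at h with hnil hcard
  obtain rfl := Option.some.inj h
  push Not at hnil
  exact ⟨hnil, hcard, rfl⟩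

theorem canonical_le {ℓ : ℕ} {X : Finset ℕ} (hℓ : ℓ ≤ F.L i)
    (h : F.canonical i ℓ = some X) : ∀ x ∈ X, x ≤ F.L i := by
  obtain ⟨-, -, rfl⟩ := canonical_eq_some h
  refine greedyB_le _ (greedyA_le (F.snd_le_of_mem_innerIntervals i) _ fun x hx => ?_)
  rwa [Finset.mem_singleton.1 hx]

/-- The largest index of a well-defined canonical `ℓ`-th solution is monotone in `ℓ`. -/
theorem exists_ge_of_canonical {ℓ ℓ' : ℕ} {X X' : Finset ℕ} (hle : ℓ ≤ ℓ')
    (hℓ' : ℓ' ≤ F.L i) (h : F.canonical i ℓ = some X) (h' : F.canonical i ℓ' = some X') :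
    ∀ x ∈ X, ∃ y ∈ X', x ≤ y := by
  intro x hx
  have hxL := canonical_le (hle.trans hℓ') h x hx
  obtain ⟨hstart, hcard, hX⟩ := canonical_eq_some h
  obtain ⟨hstart', hcard', hX'⟩ := canonical_eq_some h'
  obtain ⟨hcmp, hreach⟩ := greedyA_compare (F.fst_le_snd_of_mem_innerIntervals i)
    (F.innerIntervals i).card (isFrontier_singleton hstart) (isFrontier_singleton hstart')
    hle rfl
  unfold canonicalAux at hX hX'
  rcases lt_or_ge (greedyA (F.innerIntervals i) (F.innerIntervals i).card {ℓ'}).card (F.b i)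
    with hlt | hge
  · exact ⟨F.L i, hX' ▸ hi_mem_greedyB hℓ' (F.hb i) hlt, hxL⟩
  · rw [greedyB_eq_self _ hge] at hX'
    rw [greedyB_eq_self _ (hge.trans hcmp)] at hX
    rw [hX, hX'] at hreach
    exact hreach (hcard'.trans hcard.symm) x hx

end FlowerInstance

/-- **suffix case of Lemma `createliteral`.** Let
`Q = {r_{i,c}, …, r_{i,L i}}` be a suffix of petal `R_i`.  Then
(a) a well-defined canonical `ℓ`-th solution `X` for `R_i` intersects `Q` if and
only if `max X ≥ c`, and (b) if some well-defined canonical solution for `R_i`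
intersects `Q`, then there is a threshold `ℓ*` such that a well-defined canonical
`ℓ`-th solution intersects `Q` if and only if `ℓ ≥ ℓ*`. -/
theorem stmt_8 {n : ℕ} (F : FlowerInstance n) (i : Fin n) (c : ℕ)
    (hc1 : 1 ≤ c) (hc2 : c ≤ F.L i) :
    (∀ (ℓ : ℕ) (X : Finset ℕ), 1 ≤ ℓ → ℓ ≤ F.L i → F.canonical i ℓ = some X →
      ((∃ j ∈ X, j ∈ Finset.Icc c (F.L i)) ↔ (c : WithBot ℕ) ≤ X.max)) ∧
    ((∃ (ℓ : ℕ) (X : Finset ℕ), 1 ≤ ℓ ∧ ℓ ≤ F.L i ∧ F.canonical i ℓ = some X ∧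
        ∃ j ∈ X, j ∈ Finset.Icc c (F.L i)) →
      ∃ ℓstar : ℕ,
        ∀ (ℓ : ℕ) (X : Finset ℕ), 1 ≤ ℓ → ℓ ≤ F.L i → F.canonical i ℓ = some X →
          ((∃ j ∈ X, j ∈ Finset.Icc c (F.L i)) ↔ ℓstar ≤ ℓ)) := by
  refine ⟨fun ℓ X _ hℓ hX => ⟨?_, fun hmax => ?_⟩, fun hex => ?_⟩
  · rintro ⟨j, hj, hjc⟩
    exact le_trans (WithBot.coe_le_coe.2 (Finset.mem_Icc.1 hjc).1) (Finset.le_max hj)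
  · obtain ⟨m, hm⟩ : ∃ m : ℕ, X.max = m := by
      cases hXm : X.max with
      | bot => rw [hXm] at hmax; exact absurd hmax (WithBot.not_coe_le_bot c)
      | coe m => exact ⟨m, rfl⟩
    have hmX := Finset.mem_of_max hm
    rw [hm] at hmax
    exact ⟨m, hmX, Finset.mem_Icc.2
      ⟨WithBot.coe_le_coe.1 hmax, FlowerInstance.canonical_le hℓ hX m hmX⟩⟩
  · classical
    refine ⟨Nat.find hex, fun ℓ X hℓ1 hℓ hX =>
      ⟨fun hj => Nat.find_min' hex ⟨X, hℓ1, hℓ, hX, hj⟩, fun hle => ?_⟩⟩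
    obtain ⟨X₀, -, -, hX₀, j, hj, hjc⟩ := Nat.find_spec hex
    obtain ⟨y, hy, hjy⟩ := FlowerInstance.exists_ge_of_canonical hle hℓ hX₀ hX j hj
    exact ⟨y, hy, Finset.mem_Icc.2
      ⟨(Finset.mem_Icc.1 hjc).1.trans hjy, FlowerInstance.canonical_le hℓ hX y hy⟩⟩
end

section
/- Let φ be a totally ordered regular signed 3-CNF formula over variables x_1, …, x_n with truth value set [N], containing no trivially satisfied clause (i.e., no clause that contains literals x_i ≤ c_1 and x_i ≥ c_2 on the same variable with c_2 ≤ c_1 + 1). Build the graph G consisting of n vertex-disjoint paths R_1, …, R_n, each R_i a path on N vertices r_{i,1}, …, r_{i,N}, together with two additional vertices z and z' that are each adjacent to every vertex of every path R_i. Let P be the collection of simple paths in G consisting of: for each clause C of φ with literal segments Q_1, Q_2, Q_3 (where the segment of a literal x_i ≤ c is the prefix {r_{i,1}, …, r_{i,c}} of R_i and the segment of a literal x_i ≥ c is the suffix {r_{i,c}, …, r_{i,N}} of R_i), the simple path traversing Q_1, then z, then Q_2, then z', then Q_3; and, for each i ∈ [n], the path R_i. Then there is a set of at most n vertices of G intersecting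 every path in P if and only if φ is satisfiable. Moreover, {z, z'} is a feedback vertex set of G of size two. -/
/-!  Totally ordered regular signed CNF formulas.  A literal over variables
`Fin n` is a triple `(i, pol, c)` meaning `x_i ≥ c` when `pol = true` and
`x_i ≤ c` when `pol = false`; a clause is a list of literals and a formula a
list of clauses.  An assignment gives every variable a value in `[N]`. -/

/-- A signed literal `(i, pol, c)`: `x_i ≥ c` if `pol = true`, else `x_i ≤ c`. -/
abbrev SLit (n : ℕ) := Fin n × Bool × ℕ

/-- Satisfaction of a signed literal under an assignment `f`. -/
def slitSat {n : ℕ} (f : Fin n → ℕ) (l : SLit n) : Prop :=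
  if l.2.1 then l.2.2 ≤ f l.1 else f l.1 ≤ l.2.2

/-- The signed CNF formula `φ` is satisfiable over the truth value set `[N]`:
some assignment with values in `{1, …, N}` makes every clause contain a true
literal. -/
def SSat {n : ℕ} (N : ℕ) (φ : List (List (SLit n))) : Prop :=
  ∃ f : Fin n → ℕ, (∀ i, 1 ≤ f i ∧ f i ≤ N) ∧ ∀ C ∈ φ, ∃ l ∈ C, slitSat f l

/-!  The graph of the reduction: `n` vertex-disjoint paths `R_1, …, R_n`, each on
`N` vertices `r_{i,1}, …, r_{i,N}`, plus two vertices `z` and `z'` adjacent to every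
vertex of every path.  Vertices are `(Fin n × ℕ) ⊕ Bool`: `Sum.inl (i, j)` (for
`1 ≤ j ≤ N`) is `r_{i,j}`, `Sum.inr false` is `z` and `Sum.inr true` is `z'`. -/

/-- Vertices of the reduction graph. -/
abbrev WVertex (n : ℕ) := (Fin n × ℕ) ⊕ Bool

/-- The universal vertex `z`. -/
def wz {n : ℕ} : WVertex n := Sum.inr false

/-- The universal vertex `z'`. -/
def wz' {n : ℕ} : WVertex n := Sum.inr true

/-- The set of vertices of path `R_i` with indices in `s`. -/
def wSeg {n : ℕ} (i : Fin n) (s : Finset ℕ) : Finset (WVertex n) :=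
  s.image (fun j => Sum.inl (i, j))

/-- The reduction graph: consecutive vertices of each path `R_i` are adjacent, and
`z`, `z'` are adjacent to every path vertex (but not to each other). -/
def redGraph (n N : ℕ) : SimpleGraph (WVertex n) :=
  SimpleGraph.fromRel (fun a b =>
    match a, b with
    | Sum.inl (i, j), Sum.inl (i', j') => i = i' ∧ j' = j + 1 ∧ 1 ≤ j ∧ j' ≤ N
    | Sum.inl (i, j), Sum.inr _ => 1 ≤ j ∧ j ≤ N
    | Sum.inr _, _ => False)

/-- The segment of path `R_i` associated to a literal: the prefix
`{r_{i,1}, …, r_{i,c}}` for `x_i ≤ c` and the suffix `{r_{i,c}, …, r_{i,N}}`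
for `x_i ≥ c`. -/
def wLitSeg {n : ℕ} (N : ℕ) (l : SLit n) : Finset (WVertex n) :=
  if l.2.1 then wSeg l.1 (Finset.Icc l.2.2 N) else wSeg l.1 (Finset.Icc 1 l.2.2)

/-- The (vertex set of the) simple path associated to a clause `C`: it traverses the
segment of the first literal, then `z`, then the segment of the second literal, then
`z'`, then the segment of the third literal. -/
def wClausePath {n : ℕ} (N : ℕ) (C : List (SLit n)) : Finset (WVertex n) :=
  insert wz (insert wz' (C.foldr (fun l acc => wLitSeg N l ∪ acc) ∅))

theorem mem_wSeg {n : ℕ} {i : Fin n} {s : Finset ℕ} {x : WVertex n} :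
    x ∈ wSeg i s ↔ ∃ j ∈ s, Sum.inl (i, j) = x := by
  simp [wSeg]

/-- A vertex on the path `R_i` with index `f i` lies on the segment of a literal exactly when
`f` satisfies the literal. -/
theorem mem_wLitSeg_iff_slitSat {n N : ℕ} {f : Fin n → ℕ} (hf : ∀ i, 1 ≤ f i ∧ f i ≤ N)
    (l : SLit n) (i : Fin n) :
    Sum.inl (i, f i) ∈ wLitSeg N l ↔ i = l.1 ∧ slitSat f l := by
  obtain ⟨k, b, c⟩ := l
  have := hf i
  cases b <;> simp [wLitSeg, slitSat, mem_wSeg] <;> grind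

theorem mem_wClausePath {n N : ℕ} {C : List (SLit n)} {x : WVertex n} :
    x ∈ wClausePath N C ↔ x = wz ∨ x = wz' ∨ ∃ l ∈ C, x ∈ wLitSeg N l := by
  have h : x ∈ C.foldr (fun l acc => wLitSeg N l ∪ acc) ∅ ↔ ∃ l ∈ C, x ∈ wLitSeg N l := by
    induction C with
    | nil => simp
    | cons a C ih => simp [ih]
  simp [wClausePath, h]

/-- The set of path vertices selected by an assignment. -/
def assignmentVertices {n : ℕ} (f : Fin n → ℕ) : Finset (WVertex n) :=
  Finset.univ.image fun i => Sum.inl (i, f i)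

theorem card_assignmentVertices {n : ℕ} (f : Fin n → ℕ) : (assignmentVertices f).card = n := by
  rw [assignmentVertices, Finset.card_image_of_injective _ fun i j h => by simp_all]
  simp

theorem mem_assignmentVertices {n : ℕ} {f : Fin n → ℕ} {x : WVertex n} :
    x ∈ assignmentVertices f ↔ ∃ i, Sum.inl (i, f i) = x := by
  simp [assignmentVertices]

/-- The vertices selected by an assignment hit a clause path iff the assignment satisfies the
clause. -/
theorem assignmentVertices_inter_wClausePath_nonempty {n N : ℕ} {f : Fin n → ℕ}
    (hf : ∀ i, 1 ≤ f i ∧ f i ≤ N) (C : List (SLit n)) :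
    (assignmentVertices f ∩ wClausePath N C).Nonempty ↔ ∃ l ∈ C, slitSat f l := by
  simp only [Finset.Nonempty, Finset.mem_inter, mem_assignmentVertices, mem_wClausePath]
  constructor
  · rintro ⟨_, ⟨i, rfl⟩, h | h | ⟨l, hl, h⟩⟩
    · simp [wz] at h
    · simp [wz'] at h
    · exact ⟨l, hl, ((mem_wLitSeg_iff_slitSat hf l i).1 h).2⟩
  · rintro ⟨l, hl, h⟩
    exact ⟨_, ⟨l.1, rfl⟩, .inr (.inr ⟨l, hl, (mem_wLitSeg_iff_slitSat hf l l.1).2 ⟨rfl, h⟩⟩)⟩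

/-- A set of at most `n` vertices hitting all the paths `R_i` is selected by an assignment. -/
theorem exists_eq_assignmentVertices {n N : ℕ} {X : Finset (WVertex n)} (hX : X.card ≤ n)
    (h : ∀ i : Fin n, (X ∩ wSeg i (Finset.Icc 1 N)).Nonempty) :
    ∃ f : Fin n → ℕ, (∀ i, 1 ≤ f i ∧ f i ≤ N) ∧ X = assignmentVertices f := by
  have hsel : ∀ i : Fin n, ∃ j, (1 ≤ j ∧ j ≤ N) ∧ (Sum.inl (i, j) : WVertex n) ∈ X := by
    intro i
    obtain ⟨x, hx⟩ := h i
    obtain ⟨hxX, hx⟩ := Finset.mem_inter.1 hx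
    obtain ⟨j, hj, rfl⟩ := mem_wSeg.1 hx
    exact ⟨j, Finset.mem_Icc.1 hj, hxX⟩
  choose f hf hfX using hsel
  refine ⟨f, hf, (Finset.eq_of_subset_of_card_le ?_ ?_).symm⟩
  · intro x hx
    obtain ⟨i, rfl⟩ := mem_assignmentVertices.1 hx
    exact hfX i
  · rwa [card_assignmentVertices]

/-- If some vertex set separates the ends of an edge and is left only through that edge, then
the edge is a bridge. -/
theorem SimpleGraph.isBridge_of_separating {V : Type*} {G : SimpleGraph V} {u v : V}
    (p : V → Prop) (hu : p u) (hv : ¬ p v)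
    (hp : ∀ a b, G.Adj a b → p a → ¬ p b → a = u ∧ b = v) : G.IsBridge s(u, v) := by
  rw [SimpleGraph.isBridge_iff]
  rintro ⟨w⟩
  obtain ⟨d, -, hd, hd'⟩ := w.exists_boundary_dart {a | p a} hu hv
  have hadj := d.adj
  simp only [SimpleGraph.deleteEdges_adj] at hadj
  obtain ⟨h₁, h₂⟩ := hp _ _ hadj.1 hd hd'
  simp [h₁, h₂] at hadj

theorem redGraph_adj_inl {n N : ℕ} {i i' : Fin n} {j j' : ℕ} :
    (redGraph n N).Adj (Sum.inl (i, j)) (Sum.inl (i', j')) ↔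
      i = i' ∧ ((j' = j + 1 ∧ 1 ≤ j ∧ j' ≤ N) ∨ (j = j' + 1 ∧ 1 ≤ j' ∧ j ≤ N)) := by
  simp only [redGraph, SimpleGraph.fromRel_adj, ne_eq, Sum.inl.injEq, Prod.mk.injEq]
  grind

/-- Removing `z` and `z'` leaves a disjoint union of paths. -/
theorem redGraph_induce_isAcyclic (n N : ℕ) :
    ((redGraph n N).induce {w : WVertex n | w ≠ wz ∧ w ≠ wz'}).IsAcyclic := by
  have hinl : ∀ w : {w : WVertex n | w ≠ wz ∧ w ≠ wz'}, ∃ i j, w.1 = Sum.inl (i, j) := by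
    rintro ⟨⟨i, j⟩ | b, h₁, h₂⟩
    · exact ⟨i, j, rfl⟩
    · cases b
      · exact absurd rfl h₁
      · exact absurd rfl h₂
  have hbridge : ∀ (u v : {w : WVertex n | w ≠ wz ∧ w ≠ wz'}) (i : Fin n) (j : ℕ),
      u.1 = Sum.inl (i, j) → v.1 = Sum.inl (i, j + 1) →
      ((redGraph n N).induce {w : WVertex n | w ≠ wz ∧ w ≠ wz'}).IsBridge s(u, v) := by
    intro u v i j hu hv
    refine SimpleGraph.isBridge_of_separating
      (fun w => ∃ k, k ≤ j ∧ w.1 = Sum.inl (i, k)) ⟨j, le_rfl, hu⟩ ?_ ?_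
    · rintro ⟨k, hk, h⟩
      simp only [hv, Sum.inl.injEq, Prod.mk.injEq, true_and] at h
      omega
    · rintro a b hab ⟨k, hk, ha⟩ hb
      obtain ⟨i', k', hb'⟩ := hinl b
      rw [SimpleGraph.comap_adj] at hab
      simp only [Function.Embedding.subtype_apply, ha, hb', redGraph_adj_inl] at hab
      obtain ⟨rfl, hk'⟩ := hab
      have hlt : j < k' := by
        by_contra hle
        exact hb ⟨k', not_lt.1 hle, hb'⟩
      obtain rfl : k = j := by omega
      obtain rfl : k' = k + 1 := by omega
      exact ⟨Subtype.ext (ha.trans hu.symm), Subtype.ext (hb'.trans hv.symm)⟩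
  rw [SimpleGraph.isAcyclic_iff_forall_adj_isBridge]
  intro u v huv
  obtain ⟨i, j, hu⟩ := hinl u
  obtain ⟨i', j', hv⟩ := hinl v
  rw [SimpleGraph.comap_adj] at huv
  simp only [Function.Embedding.subtype_apply, hu, hv, redGraph_adj_inl] at huv
  obtain ⟨rfl, ⟨rfl, -⟩ | ⟨rfl, -⟩⟩ := huv
  · exact hbridge u v i j hu hv
  · rw [Sym2.eq_swap]
    exact hbridge v u i j' hv hu

/-- **Theorem: para-NP-hardness for feedback vertex number two.**
Let `φ` be a totally ordered regular signed 3-CNF formula over `x_1, …, x_n` with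
truth value set `[N]` and no trivially satisfied clause.  Build the graph `G`
consisting of `n` disjoint paths `R_1, …, R_n` on `N` vertices each plus two
vertices `z`, `z'` adjacent to all path vertices, and let `P` consist of the
clause paths (through `z` and `z'`) and the paths `R_i`.  Then there is a set of
at most `n` vertices of `G` intersecting every path of `P` if and only if `φ` is
satisfiable; moreover `{z, z'}` is a feedback vertex set of `G` of size two. -/
theorem stmt_14 {n : ℕ} (N : ℕ) (hN : 1 ≤ N) (φ : List (List (SLit n)))
    (hlen : ∀ C ∈ φ, C.length ≤ 3)
    (hrange : ∀ C ∈ φ, ∀ l ∈ C, 1 ≤ l.2.2 ∧ l.2.2 ≤ N)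
    (htriv : ∀ C ∈ φ, ∀ l₁ ∈ C, ∀ l₂ ∈ C, l₁.1 = l₂.1 →
      l₁.2.1 = false → l₂.2.1 = true → ¬ l₂.2.2 ≤ l₁.2.2 + 1) :
    ((∃ X : Finset (WVertex n),
      X.card ≤ n ∧
      (∀ x ∈ X, x = wz ∨ x = wz' ∨
        ∃ (i : Fin n) (j : ℕ), 1 ≤ j ∧ j ≤ N ∧ x = Sum.inl (i, j)) ∧
      (∀ C ∈ φ, (X ∩ wClausePath N C).Nonempty) ∧
      (∀ i : Fin n, (X ∩ wSeg i (Finset.Icc 1 N)).Nonempty)) ↔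
     SSat N φ) ∧
    ((redGraph n N).induce {w : WVertex n | w ≠ wz ∧ w ≠ wz'}).IsAcyclic ∧
    ({wz, wz'} : Finset (WVertex n)).card = 2 := by
  refine ⟨⟨?_, ?_⟩, redGraph_induce_isAcyclic n N, Finset.card_pair (by simp [wz, wz'])⟩
  · rintro ⟨X, hcard, -, hclause, hpath⟩
    obtain ⟨f, hf, rfl⟩ := exists_eq_assignmentVertices hcard hpath
    exact ⟨f, hf, fun C hC =>
      (assignmentVertices_inter_wClausePath_nonempty hf C).1 (hclause C hC)⟩
  · rintro ⟨f, hf, hsat⟩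
    refine ⟨assignmentVertices f, (card_assignmentVertices f).le, ?_, fun C hC =>
      (assignmentVertices_inter_wClausePath_nonempty hf C).2 (hsat C hC), fun i => ?_⟩
    · intro x hx
      obtain ⟨i, rfl⟩ := mem_assignmentVertices.1 hx
      exact .inr (.inr ⟨i, f i, (hf i).1, (hf i).2, rfl⟩)
    · exact ⟨Sum.inl (i, f i), Finset.mem_inter.2 ⟨mem_assignmentVertices.2 ⟨i, rfl⟩,
        mem_wSeg.2 ⟨f i, Finset.mem_Icc.2 (hf i), rfl⟩⟩⟩
end
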